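/- With the setup of the previous statement, let T be the further compression of S to the subspace (P_N)_0 of polynomials of degree ≤ N vanishing at 0 (spanned by homogeneous polynomials of degrees 1 through N). Then for every homogeneous polynomial p of degree m with 1 ≤ m ≤ N, (I − ∑_{n=1}^N b_n ∑_{|α|=n} (n!/α!) T^α (T*)^α) p = (b_m/a_m) · p. In particular, if this operator is positive semidefinite for all N, then b_n ≥ 0 for all n ≥ 1. -/

import Mathlib

open scoped ComplexOrder

/-- The unitarily invariant inner product on polynomials determined by
`⟨zᵅ, zᵝ⟩ = δ_{αβ} (1/a_{|α|}) α!/|α|!` (conjugate-linear in the first argument). -/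
noncomputable def uiInner (d : ℕ) (a : ℕ → ℝ) (p q : MvPolynomial (Fin d) ℂ) : ℂ :=
  ∑ α ∈ p.support ∪ q.support,
    (starRingEnd ℂ) (MvPolynomial.coeff α p) * MvPolynomial.coeff α q *
      ((((∏ j, Nat.factorial (α j) : ℕ) : ℝ) / (Nat.factorial (∑ j, α j)) / a (∑ j, α j) : ℝ) : ℂ)

/-!
The vector `u_γ = κ_γ z^γ`, where `κ_γ = ‖z^γ‖⁻² = (|γ|!/γ!) a_{|γ|}`, represents the functional
"coefficient of `z^γ`", so the adjoint of the compressed multiplication by `z_j` sends `u_γ` to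
`u_{γ - e_j}`, with `u_0` replaced by `0` because constants have been removed. Hence `Tᵅ(T*)ᵅ` is
diagonal, with eigenvalue `κ_{γ-α}/κ_γ` at `z^γ` if `α < γ` and `0` otherwise. Comparing the
coefficients of `z^γ` in `(∑ z_j)^n (∑ z_j)^{m-n} = (∑ z_j)^m` sums these eigenvalues, weighted by
`n!/α!`, over `|α| = n` to `a_{m-n}/a_m` for `n < m = |γ|`. For `n = m` the sum is `0` instead of
`a_0/a_m`, so in the relation `1 = ∑_{n=1}^m b_n a_{m-n}/a_m` exactly the term `b_m/a_m` survives.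
-/

section UnitarilyInvariant

open MvPolynomial

section Convolution

variable {K : Type*} [Field K]

lemma one_sub_sum_mul_div_eq {a b : ℕ → K} {m N : ℕ} (hm : 1 ≤ m) (hmN : m ≤ N) (ham : a m ≠ 0)
    (hconv : a m = ∑ n ∈ Finset.Icc 1 m, b n * a (m - n)) :
    1 - ∑ n ∈ Finset.Icc 1 N, b n * (if n < m then a (m - n) / a m else 0) =
      b m * a 0 / a m := by
  have hfilter : {n ∈ Finset.Icc 1 N | n < m} = Finset.Ico 1 m := by
    ext n
    simp only [Finset.mem_filter, Finset.mem_Icc, Finset.mem_Ico]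
    omega
  have hsum : ∑ n ∈ Finset.Icc 1 N, b n * (if n < m then a (m - n) / a m else 0) =
      (∑ n ∈ Finset.Ico 1 m, b n * a (m - n)) / a m := by
    simp only [mul_ite, mul_zero, ← Finset.sum_filter, hfilter, mul_div_assoc, Finset.sum_div]
  rw [← Finset.Ico_succ_right_eq_Icc, Order.succ_eq_add_one, Finset.sum_Ico_succ_top hm,
    Nat.sub_self] at hconv
  rw [hsum, one_sub_div ham, eq_sub_of_add_eq' hconv.symm]

end Convolution

section KernelCoeff

variable {σ : Type*}

/-- The coefficient `(|γ|!/γ!) a_{|γ|}` of `z^γ w̄^γ` in the reproducing kernel `∑ aₙ ⟨z, w⟩ⁿ`.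
It is the reciprocal of the squared norm of `z^γ`. -/
noncomputable def kernelCoeff (a : ℕ → ℝ) (γ : σ →₀ ℕ) : ℝ :=
  γ.multinomial * a γ.degree

lemma degree_tsub_of_le {s γ : σ →₀ ℕ} (hs : s ≤ γ) : (γ - s).degree = γ.degree - s.degree :=
  eq_tsub_of_add_eq (by rw [← map_add, tsub_add_cancel_of_le hs])

lemma lt_iff_le_and_degree_lt {s γ : σ →₀ ℕ} : s < γ ↔ s ≤ γ ∧ s.degree < γ.degree := by
  refine ⟨fun h => ⟨h.le, ?_⟩, fun h => h.1.lt_of_ne fun hs => h.2.ne (congrArg _ hs)⟩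
  have hne : (γ - s).degree ≠ 0 := by
    rw [Ne, Finsupp.degree_eq_zero_iff, tsub_eq_zero_iff_le]
    exact h.not_ge
  rw [degree_tsub_of_le h.le] at hne
  omega

lemma finsupp_multinomial_pos (γ : σ →₀ ℕ) : 0 < γ.multinomial :=
  Nat.multinomial_pos γ.support γ

lemma kernelCoeff_pos {a : ℕ → ℝ} (ha : ∀ k, 0 < a k) (γ : σ →₀ ℕ) : 0 < kernelCoeff a γ :=
  mul_pos (mod_cast finsupp_multinomial_pos γ) (ha _)

lemma kernelCoeff_ne_zero {a : ℕ → ℝ} (ha : ∀ k, a k ≠ 0) (γ : σ →₀ ℕ) : kernelCoeff a γ ≠ 0 :=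
  mul_ne_zero (mod_cast (finsupp_multinomial_pos γ).ne') (ha _)

variable [Fintype σ] [DecidableEq σ]

lemma degree_of_mem_piAntidiag {α : σ → ℕ} {n : ℕ} (hα : α ∈ Finset.piAntidiag Finset.univ n) :
    (Finsupp.equivFunOnFinite.symm α).degree = n := by
  rw [Finsupp.degree_eq_sum]
  exact (Finset.mem_piAntidiag.mp hα).1

lemma sum_multinomial_mul_multinomial_tsub (γ : σ →₀ ℕ) {n : ℕ} (hn : n ≤ γ.degree) :
    ∑ α ∈ Finset.piAntidiag Finset.univ n with Finsupp.equivFunOnFinite.symm α ≤ γ,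
      Nat.multinomial Finset.univ α * (γ - Finsupp.equivFunOnFinite.symm α).multinomial =
        γ.multinomial := by
  have hcoeff_pow (β : σ →₀ ℕ) (k : ℕ) (hβ : β.degree = k) :
      coeff β ((∑ i, (X i : MvPolynomial σ ℕ)) ^ k) = β.multinomial := by
    rw [coeff_sum_X_pow_of_fintype, if_pos (show β.sum (fun _ m => m) = k from hβ), Nat.cast_id]
  have hprod (α : σ → ℕ) : ∏ i, (X i : MvPolynomial σ ℕ) ^ α i =
      monomial (Finsupp.equivFunOnFinite.symm α) 1 := by
    simp [monomial_eq, Finsupp.prod_fintype]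
  rw [← hcoeff_pow γ _ rfl, ← pow_mul_pow_sub _ hn, Finset.sum_pow_eq_sum_piAntidiag,
    Finset.sum_mul, coeff_sum, Finset.sum_filter]
  refine Finset.sum_congr rfl fun α hα => ?_
  rw [hprod, mul_assoc, ← C_eq_coe_nat, coeff_C_mul, coeff_monomial_mul', one_mul]
  split_ifs with hle
  · rw [hcoeff_pow _ _ (by rw [degree_tsub_of_le hle, degree_of_mem_piAntidiag hα]), Nat.cast_id]
  · rw [mul_zero]

lemma sum_multinomial_mul_kernelCoeff_div (a : ℕ → ℝ) (γ : σ →₀ ℕ) (n : ℕ) :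
    ∑ α ∈ Finset.piAntidiag Finset.univ n, (Nat.multinomial Finset.univ α : ℝ) *
      (if Finsupp.equivFunOnFinite.symm α < γ then
        kernelCoeff a (γ - Finsupp.equivFunOnFinite.symm α) / kernelCoeff a γ else 0) =
      if n < γ.degree then a (γ.degree - n) / a γ.degree else 0 := by
  have hmult : (γ.multinomial : ℝ) ≠ 0 := mod_cast (finsupp_multinomial_pos γ).ne'
  split_ifs with hn
  · calc _ = ∑ α ∈ Finset.piAntidiag Finset.univ n with Finsupp.equivFunOnFinite.symm α ≤ γ,
          (Nat.multinomial Finset.univ α * (γ - Finsupp.equivFunOnFinite.symm α).multinomial : ℕ) *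
            (a (γ.degree - n) / a γ.degree / γ.multinomial) := by
          rw [Finset.sum_filter]
          refine Finset.sum_congr rfl fun α hα => ?_
          simp only [lt_iff_le_and_degree_lt, degree_of_mem_piAntidiag hα, hn, and_true]
          split_ifs with hle
          · rw [kernelCoeff, kernelCoeff, degree_tsub_of_le hle, degree_of_mem_piAntidiag hα]
            push_cast
            ring
          · rw [mul_zero]
      _ = a (γ.degree - n) / a γ.degree := by
          rw [← Finset.sum_mul, ← Nat.cast_sum, sum_multinomial_mul_multinomial_tsub γ hn.le,
            mul_div_cancel₀ _ hmult]
  · refine Finset.sum_eq_zero fun α hα => ?_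
    rw [if_neg, mul_zero]
    intro hlt
    exact hn (degree_of_mem_piAntidiag hα ▸ (lt_iff_le_and_degree_lt.mp hlt).2)

end KernelCoeff

section InnerProduct

variable {d N : ℕ} {a : ℕ → ℝ}

lemma uiInner_monomial_left (a : ℕ → ℝ) (γ : Fin d →₀ ℕ) (c : ℂ) (q : MvPolynomial (Fin d) ℂ) :
    uiInner d a (monomial γ c) q = starRingEnd ℂ c * coeff γ q / (kernelCoeff a γ : ℂ) := by
  have hweight : ((∏ j, (γ j).factorial : ℕ) : ℝ) / (∑ j, γ j).factorial / a (∑ j, γ j) =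
      (kernelCoeff a γ)⁻¹ := by
    have hspec := Nat.multinomial_spec Finset.univ γ
    rw [← Finsupp.multinomial_eq_of_support_subset (Finset.subset_univ _)] at hspec
    have hprod : ((∏ j, (γ j).factorial : ℕ) : ℝ) ≠ 0 :=
      mod_cast Finset.prod_ne_zero_iff.mpr fun j _ => (γ j).factorial_ne_zero
    rw [← hspec, Nat.cast_mul, div_mul_cancel_left₀ hprod, kernelCoeff, Finsupp.degree_eq_sum,
      mul_inv, div_eq_mul_inv]
  rw [uiInner, Finset.sum_eq_single γ, hweight, coeff_monomial, if_pos rfl, Complex.ofReal_inv,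
    div_eq_mul_inv]
  · intro α _ hα
    simp [coeff_monomial, hα.symm]
  · intro hγ
    simp_all

lemma conj_uiInner (a : ℕ → ℝ) (p q : MvPolynomial (Fin d) ℂ) :
    starRingEnd ℂ (uiInner d a p q) = uiInner d a q p := by
  simp only [uiInner, map_sum, map_mul, Complex.conj_conj, Complex.conj_ofReal,
    Finset.union_comm p.support, mul_comm (coeff _ p)]

/-- The space `(P_N)₀` of polynomials of degree at most `N` vanishing at `0`. -/
noncomputable def polyVanishing (d N : ℕ) : Submodule ℂ (MvPolynomial (Fin d) ℂ) :=
  restrictTotalDegree (Fin d) ℂ N ⊓ LinearMap.ker (lcoeff ℂ 0)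

lemma mem_polyVanishing {p : MvPolynomial (Fin d) ℂ} :
    p ∈ polyVanishing d N ↔ p.totalDegree ≤ N ∧ coeff 0 p = 0 := by
  rw [polyVanishing, Submodule.mem_inf, mem_restrictTotalDegree, LinearMap.mem_ker, lcoeff_apply]

lemma monomial_mem_polyVanishing {γ : Fin d →₀ ℕ} (h0 : γ ≠ 0) (hγ : γ.degree ≤ N) (c : ℂ) :
    monomial γ c ∈ polyVanishing d N :=
  mem_polyVanishing.mpr
    ⟨(totalDegree_monomial_le γ c).trans hγ, by rw [coeff_monomial, if_neg h0]⟩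

/-- The vector of the space of polynomials vanishing at `0` that represents the functional
`q ↦ coeff γ q`. This functional is zero for `γ = 0`, hence so is the vector. -/
noncomputable def coeffRepresenter (a : ℕ → ℝ) (γ : Fin d →₀ ℕ) : MvPolynomial (Fin d) ℂ :=
  if γ = 0 then 0 else monomial γ (kernelCoeff a γ : ℂ)

lemma coeffRepresenter_mem {γ : Fin d →₀ ℕ} (hγ : γ.degree ≤ N) :
    coeffRepresenter a γ ∈ polyVanishing d N := by
  rw [coeffRepresenter]
  split_ifs with h0
  · exact zero_mem _
  · exact monomial_mem_polyVanishing h0 hγ _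

lemma uiInner_coeffRepresenter (ha : ∀ k, a k ≠ 0) (γ : Fin d →₀ ℕ)
    {q : MvPolynomial (Fin d) ℂ} (hq : coeff 0 q = 0) :
    uiInner d a (coeffRepresenter a γ) q = coeff γ q := by
  rw [coeffRepresenter]
  split_ifs with h0
  · rw [h0, hq]
    simp [uiInner]
  · rw [uiInner_monomial_left, Complex.conj_ofReal, mul_div_cancel_left₀]
    exact mod_cast kernelCoeff_ne_zero ha γ

lemma monomial_eq_smul_coeffRepresenter (ha : ∀ k, a k ≠ 0) {γ : Fin d →₀ ℕ} (h0 : γ ≠ 0)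
    (c : ℂ) : monomial γ c = (c / (kernelCoeff a γ : ℂ)) • coeffRepresenter a γ := by
  rw [coeffRepresenter, if_neg h0, smul_monomial, smul_eq_mul, div_mul_cancel₀]
  exact mod_cast kernelCoeff_ne_zero ha γ

lemma eq_of_uiInner_eq (ha : ∀ k, a k ≠ 0) {p p' : MvPolynomial (Fin d) ℂ}
    (hp : p ∈ polyVanishing d N) (hp' : p' ∈ polyVanishing d N)
    (h : ∀ q ∈ polyVanishing d N, uiInner d a p q = uiInner d a p' q) : p = p' := by
  rw [mem_polyVanishing] at hp hp'
  ext γ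
  rcases le_or_gt γ.degree N with hγ | hγ
  · rw [← uiInner_coeffRepresenter ha γ hp.2, ← uiInner_coeffRepresenter ha γ hp'.2,
      ← conj_uiInner, h _ (coeffRepresenter_mem hγ), conj_uiInner]
  · rw [coeff_eq_zero_of_totalDegree_lt (hp.1.trans_lt hγ),
      coeff_eq_zero_of_totalDegree_lt (hp'.1.trans_lt hγ)]

end InnerProduct

section MultiPow

/-- The multi-index power `A₁^{α₁} ⋯ A_d^{α_d}` of a tuple, with the factors in this order since
the entries of the tuple need not commute. -/
def multiPow {M : Type*} [Monoid M] {d : ℕ} (A : Fin d → M) (α : Fin d → ℕ) : M :=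
  (List.ofFn fun j => A j ^ α j).prod

lemma multiPow_induction {M : Type*} [Monoid M] {d : ℕ} {P : (Fin d →₀ ℕ) → M → Prop}
    (one : P 0 1) (mul : ∀ s t A B, P s A → P t B → P (s + t) (A * B))
    {A : Fin d → M} (hA : ∀ j, P (Finsupp.single j 1) (A j)) (α : Fin d → ℕ) :
    P (Finsupp.equivFunOnFinite.symm α) (multiPow A α) := by
  have hpow (j : Fin d) (k : ℕ) : P (Finsupp.single j k) (A j ^ k) := by
    induction k with
    | zero => simpa using one
    | succ k ih => simpa [pow_succ] using mul _ _ _ _ ih (hA j)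
  have hlist (l : List (Fin d)) : P (l.map fun j => Finsupp.single j (α j)).sum
      (l.map fun j => A j ^ α j).prod := by
    induction l with
    | nil => simpa using one
    | cons j l ih => simpa using mul _ _ _ _ (hpow j (α j)) ih
  have hsum : ((List.finRange d).map fun j => Finsupp.single j (α j)).sum =
      Finsupp.equivFunOnFinite.symm α := by
    rw [← List.ofFn_eq_map, List.sum_ofFn, Finsupp.equivFunOnFinite_symm_eq_sum]
  rw [multiPow, List.ofFn_eq_map, ← hsum]
  exact hlist _

end MultiPow

section Shifts

variable {d N : ℕ} {a : ℕ → ℝ} {A B : Module.End ℂ (MvPolynomial (Fin d) ℂ)} {s t : Fin d →₀ ℕ}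

/-- `A` acts as multiplication by `z^s` on the non-constant monomials for which the result still
has degree at most `N`. -/
def IsForwardShift (N : ℕ) (s : Fin d →₀ ℕ) (A : Module.End ℂ (MvPolynomial (Fin d) ℂ)) : Prop :=
  ∀ (γ : Fin d →₀ ℕ) (c : ℂ), γ ≠ 0 → γ.degree + s.degree ≤ N →
    A (monomial γ c) = monomial (γ + s) c

/-- `A` lowers the index of the coefficient representers of degree at most `N` by `s`. This is how
the adjoint of multiplication by `z^s` acts. -/
def IsBackwardShift (a : ℕ → ℝ) (N : ℕ) (s : Fin d →₀ ℕ)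
    (A : Module.End ℂ (MvPolynomial (Fin d) ℂ)) : Prop :=
  ∀ γ : Fin d →₀ ℕ, γ.degree ≤ N →
    A (coeffRepresenter a γ) = if s ≤ γ then coeffRepresenter a (γ - s) else 0

lemma IsForwardShift.one : IsForwardShift (d := d) N 0 1 := by
  intro γ c _ _
  rw [add_zero, Module.End.one_apply]

lemma IsForwardShift.mul (hA : IsForwardShift N s A) (hB : IsForwardShift N t B) :
    IsForwardShift N (s + t) (A * B) := by
  intro γ c h0 hγ
  rw [map_add] at hγ
  rw [Module.End.mul_apply, hB γ c h0 (by omega), hA _ c (by simp [h0]) (by rw [map_add]; omega),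
    add_assoc, add_comm t s]

lemma IsBackwardShift.one : IsBackwardShift (d := d) a N 0 1 := by
  intro γ _
  rw [Module.End.one_apply, if_pos zero_le, tsub_zero]

lemma IsBackwardShift.mul (hA : IsBackwardShift a N s A) (hB : IsBackwardShift a N t B) :
    IsBackwardShift a N (s + t) (A * B) := by
  intro γ hγ
  rw [Module.End.mul_apply, hB γ hγ]
  by_cases ht : t ≤ γ
  · rw [if_pos ht, hA _ ((Finsupp.degree_mono tsub_le_self).trans hγ), tsub_tsub, add_comm t s]
    simp only [le_tsub_iff_right ht]
  · rw [if_neg ht, map_zero, if_neg fun h => ht (le_add_self.trans h)]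

lemma IsForwardShift.apply_apply_coeffRepresenter (ha : ∀ k, a k ≠ 0) (hA : IsForwardShift N s A)
    (hB : IsBackwardShift a N s B) {γ : Fin d →₀ ℕ} (hγ : γ.degree ≤ N) :
    A (B (coeffRepresenter a γ)) =
      ((if s < γ then kernelCoeff a (γ - s) / kernelCoeff a γ else 0 : ℝ) : ℂ) •
        coeffRepresenter a γ := by
  rw [hB γ hγ]
  by_cases hlt : s < γ
  · have h0 : γ - s ≠ 0 := fun h => hlt.not_ge (tsub_eq_zero_iff_le.mp h)
    have hadd : γ - s + s = γ := tsub_add_cancel_of_le hlt.le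
    rw [if_pos hlt.le, if_pos hlt, coeffRepresenter, if_neg h0,
      hA _ _ h0 (by rwa [← map_add, hadd]), hadd,
      monomial_eq_smul_coeffRepresenter ha (pos_of_gt hlt).ne', Complex.ofReal_div]
  · rw [if_neg hlt, Complex.ofReal_zero, zero_smul]
    split_ifs with hle
    · obtain rfl : s = γ := hle.eq_of_not_lt hlt
      rw [tsub_self, coeffRepresenter, if_pos rfl, map_zero]
    · exact map_zero A

end Shifts

section Compression

variable {d N : ℕ} {a : ℕ → ℝ} {A B : Module.End ℂ (MvPolynomial (Fin d) ℂ)} {j : Fin d}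

/-- On `(P_N)₀`, `A` is multiplication by `z_j` followed by truncation to degree at most `N`, that
is, the compression of multiplication by `z_j`. -/
def IsMulCompression (N : ℕ) (j : Fin d) (A : Module.End ℂ (MvPolynomial (Fin d) ℂ)) : Prop :=
  ∀ p ∈ polyVanishing d N, A p = ∑ n ∈ Finset.range (N + 1), homogeneousComponent n (X j * p)

/-- `B` maps `(P_N)₀` into itself and is the adjoint of `A` there. -/
structure IsAdjointOn (a : ℕ → ℝ) (N : ℕ) (A B : Module.End ℂ (MvPolynomial (Fin d) ℂ)) :
    Prop where
  mapsTo : ∀ p ∈ polyVanishing d N, B p ∈ polyVanishing d N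
  uiInner_eq : ∀ p ∈ polyVanishing d N, ∀ q ∈ polyVanishing d N,
    uiInner d a (B p) q = uiInner d a p (A q)

lemma IsMulCompression.coeff_apply (hA : IsMulCompression N j A) {p : MvPolynomial (Fin d) ℂ}
    (hp : p ∈ polyVanishing d N) (γ : Fin d →₀ ℕ) :
    coeff γ (A p) = if γ.degree ≤ N then coeff γ (X j * p) else 0 := by
  simp only [hA p hp, coeff_sum, coeff_homogeneousComponent, Finset.sum_ite_eq, Finset.mem_range,
    Nat.lt_succ_iff]

lemma IsMulCompression.isForwardShift (hA : IsMulCompression N j A) :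
    IsForwardShift N (Finsupp.single j 1) A := by
  intro γ c h0 hγ
  have hmul : X j * monomial γ c = monomial (γ + Finsupp.single j 1) c := by
    rw [X, monomial_mul, one_mul, add_comm]
  ext β
  rw [hA.coeff_apply (monomial_mem_polyVanishing h0 ((Nat.le_add_right _ _).trans hγ) c), hmul,
    coeff_monomial, ite_eq_left_iff]
  intro hβ
  rw [if_neg]
  rintro rfl
  exact hβ (by rwa [map_add])

lemma IsAdjointOn.isBackwardShift (ha : ∀ k, a k ≠ 0) (hA : IsMulCompression N j A)
    (hAB : IsAdjointOn a N A B) : IsBackwardShift a N (Finsupp.single j 1) B := by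
  intro γ hγ
  have hu := coeffRepresenter_mem (a := a) hγ
  have hsub : (γ - Finsupp.single j 1).degree ≤ N := (Finsupp.degree_mono tsub_le_self).trans hγ
  refine eq_of_uiInner_eq ha (hAB.mapsTo _ hu) ?_ fun q hq => ?_
  · split_ifs
    exacts [coeffRepresenter_mem hsub, zero_mem _]
  have hAq : coeff 0 (A q) = 0 := by
    rw [hA.coeff_apply hq, coeff_X_mul']
    simp
  rw [hAB.uiInner_eq _ hu q hq, uiInner_coeffRepresenter ha γ hAq, hA.coeff_apply hq, if_pos hγ, X,
    coeff_monomial_mul', one_mul]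
  split_ifs
  · rw [uiInner_coeffRepresenter ha _ (mem_polyVanishing.mp hq).2]
  · simp [uiInner]

end Compression

section DefectOperator

variable {d N : ℕ} {a b : ℕ → ℝ} {T Tstar : Fin d → Module.End ℂ (MvPolynomial (Fin d) ℂ)}

/-- The operator `∑_{|α|=n} (n!/α!) Tᵅ(T*)ᵅ`, the `n`-th term of the defect operator before
weighting by `bₙ`. -/
noncomputable def multinomialSum (T Tstar : Fin d → Module.End ℂ (MvPolynomial (Fin d) ℂ))
    (n : ℕ) : Module.End ℂ (MvPolynomial (Fin d) ℂ) :=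
  ∑ α ∈ Finset.Nat.antidiagonalTuple d n,
    (Nat.multinomial Finset.univ α : ℂ) • (multiPow T α * multiPow Tstar α)

/-- The defect operator `I - ∑_{n=1}^N bₙ ∑_{|α|=n} (n!/α!) Tᵅ(T*)ᵅ` of a tuple `T` with adjoint
tuple `Tstar`. -/
noncomputable def defectOperator (b : ℕ → ℝ) (N : ℕ)
    (T Tstar : Fin d → Module.End ℂ (MvPolynomial (Fin d) ℂ)) :
    Module.End ℂ (MvPolynomial (Fin d) ℂ) :=
  1 - ∑ n ∈ Finset.Icc 1 N, (b n : ℂ) • multinomialSum T Tstar n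

lemma defectOperator_apply (b : ℕ → ℝ) (N : ℕ)
    (T Tstar : Fin d → Module.End ℂ (MvPolynomial (Fin d) ℂ)) (p : MvPolynomial (Fin d) ℂ) :
    defectOperator b N T Tstar p = p - ∑ n ∈ Finset.Icc 1 N, (b n : ℂ) •
      ∑ α ∈ Finset.Nat.antidiagonalTuple d n, (Nat.multinomial Finset.univ α : ℂ) •
        (List.ofFn fun j => T j ^ α j).prod ((List.ofFn fun j => Tstar j ^ α j).prod p) := by
  simp only [defectOperator, multinomialSum, multiPow, LinearMap.sub_apply, Module.End.one_apply,
    LinearMap.sum_apply, LinearMap.smul_apply, Module.End.mul_apply]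

lemma multinomialSum_coeffRepresenter (ha : ∀ k, a k ≠ 0)
    (hT : ∀ j, IsForwardShift N (Finsupp.single j 1) (T j))
    (hTstar : ∀ j, IsBackwardShift a N (Finsupp.single j 1) (Tstar j))
    {γ : Fin d →₀ ℕ} (hγ : γ.degree ≤ N) (n : ℕ) :
    multinomialSum T Tstar n (coeffRepresenter a γ) =
      ((if n < γ.degree then a (γ.degree - n) / a γ.degree else 0 : ℝ) : ℂ) •
        coeffRepresenter a γ := by
  have hforward (α : Fin d → ℕ) := multiPow_induction .one (fun _ _ _ _ => .mul) hT α
  have hbackward (α : Fin d → ℕ) := multiPow_induction .one (fun _ _ _ _ => .mul) hTstar α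
  rw [multinomialSum, ← Finset.piAntidiag_univ_fin_eq_antidiagonalTuple,
    ← sum_multinomial_mul_kernelCoeff_div a γ n, LinearMap.sum_apply, Complex.ofReal_sum,
    Finset.sum_smul]
  refine Finset.sum_congr rfl fun α _ => ?_
  rw [LinearMap.smul_apply, Module.End.mul_apply,
    (hforward α).apply_apply_coeffRepresenter ha (hbackward α) hγ, smul_smul, Complex.ofReal_mul,
    Complex.ofReal_natCast]

lemma defectOperator_coeffRepresenter (ha : ∀ k, a k ≠ 0)
    (hT : ∀ j, IsForwardShift N (Finsupp.single j 1) (T j))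
    (hTstar : ∀ j, IsBackwardShift a N (Finsupp.single j 1) (Tstar j))
    {γ : Fin d →₀ ℕ} (hγ : γ.degree ≤ N) (hγ1 : 1 ≤ γ.degree)
    (hconv : a γ.degree = ∑ n ∈ Finset.Icc 1 γ.degree, b n * a (γ.degree - n)) :
    defectOperator b N T Tstar (coeffRepresenter a γ) =
      ((b γ.degree * a 0 / a γ.degree : ℝ) : ℂ) • coeffRepresenter a γ := by
  rw [← one_sub_sum_mul_div_eq hγ1 hγ (ha _) hconv]
  simp only [defectOperator, LinearMap.sub_apply, Module.End.one_apply, LinearMap.sum_apply,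
    LinearMap.smul_apply, multinomialSum_coeffRepresenter ha hT hTstar hγ, smul_smul,
    Complex.ofReal_sub, Complex.ofReal_one, Complex.ofReal_sum, Complex.ofReal_mul, sub_smul,
    one_smul, Finset.sum_smul]

lemma defectOperator_apply_of_isHomogeneous (ha : ∀ k, a k ≠ 0)
    (hT : ∀ j, IsForwardShift N (Finsupp.single j 1) (T j))
    (hTstar : ∀ j, IsBackwardShift a N (Finsupp.single j 1) (Tstar j))
    {m : ℕ} (hm : 1 ≤ m) (hmN : m ≤ N)
    (hconv : a m = ∑ n ∈ Finset.Icc 1 m, b n * a (m - n))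
    {p : MvPolynomial (Fin d) ℂ} (hp : p.IsHomogeneous m) :
    defectOperator b N T Tstar p = ((b m * a 0 / a m : ℝ) : ℂ) • p := by
  have hmonomial (γ : Fin d →₀ ℕ) (c : ℂ) (hγ : γ.degree = m) :
      defectOperator b N T Tstar (monomial γ c) =
        ((b m * a 0 / a m : ℝ) : ℂ) • monomial γ c := by
    subst hγ
    have h0 : γ ≠ 0 := by
      rintro rfl
      simp at hm
    rw [monomial_eq_smul_coeffRepresenter ha h0, map_smul,
      defectOperator_coeffRepresenter ha hT hTstar hmN hm hconv, smul_comm]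
  rw [p.as_sum, map_sum, Finset.smul_sum]
  refine Finset.sum_congr rfl fun γ hγ => hmonomial γ _ ?_
  rw [Finsupp.degree_eq_weight_one]
  exact hp (mem_support_iff.mp hγ)

lemma eigenvalue_nonneg_of_uiInner_nonneg (hd : 0 < d) (ha : ∀ k, 0 < a k) {n : ℕ} (hn : 1 ≤ n)
    (hnN : n ≤ N) {A : Module.End ℂ (MvPolynomial (Fin d) ℂ)} {r : ℝ}
    (heig : ∀ p : MvPolynomial (Fin d) ℂ, p.IsHomogeneous n → A p = (r : ℂ) • p)
    (hpos : ∀ p ∈ polyVanishing d N, 0 ≤ uiInner d a (A p) p) : 0 ≤ r := by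
  let γ : Fin d →₀ ℕ := Finsupp.single ⟨0, hd⟩ n
  have hγ : γ.degree = n := Finsupp.degree_single _ _
  have hγ0 : γ ≠ 0 := Finsupp.single_ne_zero.mpr (by omega)
  have h := hpos (monomial γ 1) (monomial_mem_polyVanishing hγ0 (hγ.trans_le hnN) 1)
  rw [heig _ (isHomogeneous_monomial 1 hγ), smul_monomial, uiInner_monomial_left, coeff_monomial,
    if_pos rfl, smul_eq_mul, mul_one, mul_one, Complex.conj_ofReal, ← Complex.ofReal_div,
    Complex.zero_le_real, le_div_iff₀ (kernelCoeff_pos ha γ), zero_mul] at h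
  exact h

end DefectOperator

end UnitarilyInvariant

/-- Let `T` be the compression of the multiplication tuple to the space `(P_N)₀` of
polynomials of degree at most `N` vanishing at `0`, and `Tstar` its adjoint there.
Then for every homogeneous `p` of degree `m` with `1 ≤ m ≤ N`,
`(I - ∑_{n=1}^N bₙ ∑_{|α|=n} (n!/α!) Tᵅ(T*)ᵅ) p = (b_m/a_m) p`; in particular, if
this operator is positive semidefinite then `bₙ ≥ 0` for `1 ≤ n ≤ N`. -/
theorem stmt_19 (d N : ℕ) (hd : 0 < d) (a b : ℕ → ℝ) (ha0 : a 0 = 1) (hap : ∀ k, 0 < a k)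
    (hconv : ∀ m : ℕ, 1 ≤ m → a m = ∑ n ∈ Finset.Icc 1 m, b n * a (m - n))
    (T Tstar : Fin d → Module.End ℂ (MvPolynomial (Fin d) ℂ))
    (hT : ∀ (j : Fin d) (p : MvPolynomial (Fin d) ℂ),
      p.totalDegree ≤ N → MvPolynomial.coeff 0 p = 0 →
      T j p = ∑ n ∈ Finset.range (N + 1),
        MvPolynomial.homogeneousComponent n (MvPolynomial.X j * p))
    (hTstarMem : ∀ (j : Fin d) (p : MvPolynomial (Fin d) ℂ),
      p.totalDegree ≤ N → MvPolynomial.coeff 0 p = 0 →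
      (Tstar j p).totalDegree ≤ N ∧ MvPolynomial.coeff 0 (Tstar j p) = 0)
    (hTstar : ∀ (j : Fin d) (p q : MvPolynomial (Fin d) ℂ),
      p.totalDegree ≤ N → MvPolynomial.coeff 0 p = 0 →
      q.totalDegree ≤ N → MvPolynomial.coeff 0 q = 0 →
      uiInner d a (Tstar j p) q = uiInner d a p (T j q)) :
    (∀ (m : ℕ) (p : MvPolynomial (Fin d) ℂ), 1 ≤ m → m ≤ N → p.IsHomogeneous m →
      p - ∑ n ∈ Finset.Icc 1 N, ((b n : ℝ) : ℂ) •
          ∑ α ∈ Finset.Nat.antidiagonalTuple d n,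
            (Nat.multinomial Finset.univ α : ℂ) •
              ((List.ofFn fun j => T j ^ α j).prod
                ((List.ofFn fun j => Tstar j ^ α j).prod p))
        = (((b m / a m : ℝ)) : ℂ) • p) ∧
    ((∀ p : MvPolynomial (Fin d) ℂ, p.totalDegree ≤ N → MvPolynomial.coeff 0 p = 0 →
        0 ≤ uiInner d a
          (p - ∑ n ∈ Finset.Icc 1 N, ((b n : ℝ) : ℂ) •
            ∑ α ∈ Finset.Nat.antidiagonalTuple d n,
              (Nat.multinomial Finset.univ α : ℂ) •
                ((List.ofFn fun j => T j ^ α j).prod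
                  ((List.ofFn fun j => Tstar j ^ α j).prod p))) p) →
      ∀ n : ℕ, 1 ≤ n → n ≤ N → 0 ≤ b n) := by
  have hmul (j : Fin d) : IsMulCompression N j (T j) := fun p hp =>
    (mem_polyVanishing.mp hp).elim (hT j p)
  have hadj (j : Fin d) : IsAdjointOn a N (T j) (Tstar j) :=
    { mapsTo := fun p hp =>
        mem_polyVanishing.mpr ((mem_polyVanishing.mp hp).elim (hTstarMem j p))
      uiInner_eq := fun p hp q hq =>
        (mem_polyVanishing.mp hq).elim ((mem_polyVanishing.mp hp).elim (hTstar j p q)) }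
  have ha (k : ℕ) : a k ≠ 0 := (hap k).ne'
  have heig (m : ℕ) (p : MvPolynomial (Fin d) ℂ) (hm : 1 ≤ m) (hmN : m ≤ N)
      (hp : p.IsHomogeneous m) :
      defectOperator b N T Tstar p = ((b m / a m : ℝ) : ℂ) • p := by
    rw [defectOperator_apply_of_isHomogeneous ha (fun j => (hmul j).isForwardShift)
      (fun j => (hadj j).isBackwardShift ha (hmul j)) hm hmN (hconv m hm) hp, ha0, mul_one]
  simp only [← defectOperator_apply]
  refine ⟨heig, fun hpos n hn hnN => ?_⟩
  have hquot : 0 ≤ b n / a n :=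
    eigenvalue_nonneg_of_uiInner_nonneg hd hap hn hnN (heig n · hn hnN) fun p hp =>
      (mem_polyVanishing.mp hp).elim (hpos p)
  rwa [le_div_iff₀ (hap n), zero_mul] at hquot
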